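/- Let $G_n = a_1(n)\alpha_1^n + \cdots + a_d(n)\alpha_d^n$ and $H_m = b_1(m)\beta_1^m + \cdots + b_t(m)\beta_t^m$ be two non-degenerate linear recurrence sequences defined over a function field $F$ in one variable over $\mathbb{C}$. Assume that $\alpha_1 \notin \mathbb{C}$, and that for every $j \in \{1,\ldots,t\}$ the pair $(\alpha_1, \beta_j)$ is multiplicatively independent. Let $\mu$ be a valuation on $F$ such that $\mu(\alpha_1) \le \mu(\alpha_i)$ for all $i \in \{1,\ldots,d\}$, and fix $a, b \in F^*$. Then there exist effectively computable constants $c_0$ and $C$, independent of $n$ and $m$, such that for all pairs $(n,m)$ of non-negative integers with $\min\{n,m\} > c_0$ one has $\mu(a G_n - b H_m) \le \mu(G_n) + C$. -/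

import Mathlib

/-!
STATEMENT 0: Theorem 1 (both indices large) of the paper, for linear recurrence
sequences over a function field `F` in one variable over `ℂ`.
-/

/-- A (normalized discrete) valuation on a function field `F` over `ℂ`:
a map `F → ℤ ∪ {∞}` that is `∞` exactly at `0`, additive on products,
satisfies the ultrametric inequality, is trivial on the constants `ℂ`,
and attains the value `1` (i.e. is a normalized discrete valuation). -/
structure FFValuation (F : Type*) [Field F] [Algebra ℂ F] where
  v : F → WithTop ℤ
  v_zero : v 0 = ⊤
  v_ne_top : ∀ f : F, f ≠ 0 → v f ≠ ⊤
  v_mul : ∀ f g : F, v (f * g) = v f + v g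
  v_add : ∀ f g : F, min (v f) (v g) ≤ v (f + g)
  v_const : ∀ c : ℂ, c ≠ 0 → v (algebraMap ℂ F c) = 0
  v_exists_one : ∃ f : F, v f = 1

/-- `f` lies in the field of constants `ℂ` of `F`. -/
def IsConst (F : Type*) [Field F] [Algebra ℂ F] (f : F) : Prop :=
  f ∈ Set.range (algebraMap ℂ F)

/-- `α` and `β` are multiplicatively independent: `α^r β^s ∈ ℂ` forces `r = s = 0`. -/
def MultIndep (F : Type*) [Field F] [Algebra ℂ F] (α β : F) : Prop :=
  ∀ r s : ℤ, IsConst F (α ^ r * β ^ s) → r = 0 ∧ s = 0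

/-!
Write `a G_n - b H_m` as a sum of terms `x_i γ_i ^ e_i`, where the `γ_i` are all the roots `α_i`
and `β_j` and the `x_i` range over a fixed finite-dimensional `k`-space. A `k`-derivation of `F`
with field of constants `k` turns `k`-linear independence of such terms into the nonvanishing of a
Wronskian, and the Wronskian of the terms `x_i γ_i ^ e_i` is `∏ γ_i ^ e_i` times an element of a
fixed finite-dimensional space. The derivation can be chosen so as not to increase the size of
elements at a given place, so each `γ_i ^ e_i` occurring in an independent sum is bounded by that
sum up to a constant. Hence `α_1 ^ n`, and with it `G_n`, is bounded by `a G_n - b H_m`, unless the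
term of `α_1` is in the span of the others. In a minimal relation of that kind, all terms have
comparable size at every place of `F`, and suitable places of `F` rule this out for large `n`: a
single one for the ratio `α_1 / α_i`, two of them for the multiplicatively independent pair
`(α_1, β_j)`.
-/

open Polynomial WithZero Filter
open scoped IntermediateField Topology

section LinearBounds

variable {k F Γ : Type*} [Field k] [Field F] [Algebra k F] [LinearOrderedCommGroupWithZero Γ]
  (v : Valuation F Γ) [v.IsTrivialOn k]

lemma valuation_smul_of_ne_zero {c : k} (hc : c ≠ 0) (x : F) : v (c • x) = v x := by
  rw [Algebra.smul_def, map_mul, Valuation.IsTrivialOn.eq_one c hc, one_mul]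

lemma valuation_smul_le (c : k) (x : F) : v (c • x) ≤ v x := by
  rcases eq_or_ne c 0 with rfl | hc
  · simp
  · exact (valuation_smul_of_ne_zero v hc x).le

lemma linearIndependent_of_injective_valuation {ι : Type*} {x : ι → F} (hx : ∀ i, x i ≠ 0)
    (hv : Function.Injective (v ∘ x)) : LinearIndependent k x := by
  classical
  rw [linearIndependent_iff']
  intro s c hsum
  by_contra! hc
  obtain ⟨i, hi, hci⟩ := hc
  obtain ⟨j, hj, hmax⟩ := (s.filter (c · ≠ 0)).exists_max_image (v ∘ x) ⟨i, by simp [hi, hci]⟩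
  rw [Finset.mem_filter] at hj
  have hlt : ∀ l ∈ s \ {j}, v (c l • x l) < v (c j • x j) := by
    intro l hl
    rw [Finset.mem_sdiff, Finset.mem_singleton] at hl
    rw [valuation_smul_of_ne_zero v hj.2]
    rcases eq_or_ne (c l) 0 with hcl | hcl
    · simpa [hcl, zero_lt_iff] using hx j
    · rw [valuation_smul_of_ne_zero v hcl]
      exact (hmax l (by simp [hl.1, hcl])).lt_of_ne (hv.ne hl.2)
  have hval := v.map_sum_eq_of_lt hj.1 hlt
  rw [hsum, map_zero, valuation_smul_of_ne_zero v hj.2] at hval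
  exact hx j (v.zero_iff.1 hval.symm)

lemma finite_valuation_image {V : Submodule k F} (hV : V.FG) : (v '' V).Finite := by
  have : FiniteDimensional k V := Module.Finite.iff_fg.2 hV
  choose x hxV hx using fun γ : ↥(v '' (V \ {0})) ↦ γ.2
  have hind : LinearIndependent k fun γ ↦ (⟨x γ, (hxV γ).1⟩ : V) :=
    .of_comp V.subtype <| linearIndependent_of_injective_valuation v (fun γ ↦ (hxV γ).2)
      fun γ δ h ↦ Subtype.ext ((hx γ).symm.trans (h.trans (hx δ)))
  have := hind.finite
  refine ((Set.toFinite (v '' (V \ {0}))).insert 0).subset ?_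
  rintro _ ⟨y, hy, rfl⟩
  rcases eq_or_ne y 0 with rfl | hy0
  · simp
  · exact .inr ⟨y, ⟨hy, hy0⟩, rfl⟩

lemma exists_valuation_bound {V : Submodule k F} (hV : V.FG) :
    ∃ C, ∀ x ∈ V, v x ≤ C ∧ (x ≠ 0 → 1 ≤ C * v x) := by
  have hfin := finite_valuation_image v hV
  obtain ⟨C, hC⟩ := (hfin.union (hfin.image (·⁻¹))).bddAbove
  refine ⟨C, fun x hx ↦ ⟨hC (.inl ⟨x, hx, rfl⟩), fun hx0 ↦ ?_⟩⟩
  have hinv : (v x)⁻¹ ≤ C := hC (.inr ⟨_, ⟨x, hx, rfl⟩, rfl⟩)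
  exact (inv_le_iff_one_le_mul₀ (zero_lt_iff.2 (v.ne_zero_iff.2 hx0))).1 hinv

end LinearBounds

section Wronskian

variable {k F ι : Type*} [Field k] [Field F] [Algebra k F] (D : Derivation k F F)

/-- The Wronskian of two elements with respect to a derivation, as a linear map in the second
element. -/
def wronskian (x : F) : F →ₗ[k] F :=
  x • (D : F →ₗ[k] F) - LinearMap.mulLeft k (D x)

lemma wronskian_apply (x y : F) : wronskian D x y = x * D y - D x * y := rfl

lemma wronskian_self (x : F) : wronskian D x x = 0 := by
  rw [wronskian_apply, mul_comm, sub_self]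

lemma wronskian_mul_mul (x y : F) {u w : F} (hu : u ≠ 0) (hw : w ≠ 0) :
    wronskian D (x * u) (y * w) =
      u * (x * (D y + y * (D w / w)) - y * (D x + x * (D u / u))) * w := by
  simp only [wronskian_apply, D.leibniz, smul_eq_mul]
  field

lemma ker_wronskian_le {D : Derivation k F F} (hker : ∀ x, D x = 0 → x ∈ Set.range (algebraMap k F))
    {x : F} (hx : x ≠ 0) : LinearMap.ker (wronskian D x) ≤ k ∙ x := by
  intro y hy
  rw [LinearMap.mem_ker, wronskian_apply] at hy
  obtain ⟨c, hc⟩ := hker (y / x) (by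
    rw [D.leibniz_div, smul_eq_mul, smul_eq_mul, smul_eq_mul, mul_comm y, hy, mul_zero])
  refine Submodule.mem_span_singleton.2 ⟨c, ?_⟩
  rw [Algebra.smul_def, hc, div_mul_cancel₀ _ hx]

lemma linearIndepOn_wronskian {D : Derivation k F F}
    (hker : ∀ x, D x = 0 → x ∈ Set.range (algebraMap k F)) {w : ι → F} {s : Set ι}
    (hw : LinearIndepOn k w s) {j : ι} (hj : j ∈ s) :
    LinearIndepOn k (fun i ↦ wronskian D (w j) (w i)) (s \ {j}) := by
  rw [← Set.insert_sdiff_self_of_mem hj, linearIndepOn_insert (by simp)] at hw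
  refine LinearIndependent.map hw.1 ?_
  rw [← Set.image_eq_range]
  have hj0 : w j ≠ 0 := fun h ↦ hw.2 (h.symm ▸ zero_mem _)
  exact ((Submodule.disjoint_span_singleton' hj0).2 hw.2).mono_right (ker_wronskian_le hker hj0)

-- The derivative of `x * u` is `(D x + x * (D u / u)) * u`, so taking Wronskians with the `j`-th
-- term only changes the coefficients `x`.
lemma exists_wronskian_coefficients {D : Derivation k F F}
    (hker : ∀ x, D x = 0 → x ∈ Set.range (algebraMap k F)) [DecidableEq ι] {V W : Submodule k F}
    {x u : ι → F} (hx : ∀ i, x i ∈ V) (hu : ∀ i, u i ≠ 0) (huW : ∀ i, D (u i) / u i ∈ W)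
    {T : Finset ι} (hind : LinearIndepOn k (x * u) T) {j : ι} (hj : j ∈ T) :
    ∃ x' : ι → F, (∀ i, x' i ∈ V * (V.map (D : F →ₗ[k] F) ⊔ V * W)) ∧
      LinearIndepOn k (x' * u) (T.erase j) ∧
      wronskian D (x j * u j) (∑ i ∈ T, x i * u i) = u j * ∑ i ∈ T.erase j, x' i * u i := by
  let x' : ι → F := fun i ↦
    x j * (D (x i) + x i * (D (u i) / u i)) - x i * (D (x j) + x j * (D (u j) / u j))
  have hwron : ∀ i, wronskian D ((x * u) j) ((x * u) i) = u j * (x' i * u i) := fun i ↦ by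
    rw [Pi.mul_apply, Pi.mul_apply, wronskian_mul_mul D _ _ (hu j) (hu i), mul_assoc]
  refine ⟨x', ?_, ?_, ?_⟩
  · have hmem : ∀ i, D (x i) + x i * (D (u i) / u i) ∈ V.map (D : F →ₗ[k] F) ⊔ V * W := fun i ↦
      Submodule.add_mem_sup (Submodule.mem_map_of_mem (hx i))
        (Submodule.mul_mem_mul (hx i) (huW i))
    exact fun i ↦ sub_mem (Submodule.mul_mem_mul (hx j) (hmem i))
      (Submodule.mul_mem_mul (hx i) (hmem j))
  · have hind' := linearIndepOn_wronskian hker hind (Finset.mem_coe.2 hj)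
    simp only [hwron] at hind'
    rw [Finset.coe_erase]
    exact LinearIndependent.of_comp (LinearMap.mulLeft k (u j)) hind'
  · rw [map_sum, ← Finset.add_sum_erase T _ hj, wronskian_self, zero_add, Finset.mul_sum]
    exact Finset.sum_congr rfl fun i _ ↦ hwron i

variable {Γ : Type*} [LinearOrderedCommGroupWithZero Γ] (v : Valuation F Γ)

lemma valuation_wronskian_le {D : Derivation k F F} (hD : ∀ x, v (D x) ≤ v x) (x y : F) :
    v (wronskian D x y) ≤ v x * v y := by
  rw [wronskian_apply]
  refine v.map_sub_le ?_ ?_ <;> rw [map_mul]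
  · exact mul_le_mul_right (hD y) _
  · exact mul_le_mul_left (hD x) _

lemma valuation_le_of_wronskian_eq {D : Derivation k F F} (hD : ∀ x, v (D x) ≤ v x) {x u f g : F}
    (hu : u ≠ 0) (h : wronskian D (x * u) f = u * g) : v g ≤ v x * v f := by
  refine (mul_le_mul_iff_right₀ (zero_lt_iff.2 (v.ne_zero_iff.2 hu))).1 ?_
  calc v u * v g = v (wronskian D (x * u) f) := by rw [h, map_mul]
    _ ≤ v (x * u) * v f := valuation_wronskian_le v hD _ _
    _ = v u * (v x * v f) := by rw [map_mul, mul_comm (v x), mul_assoc]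

lemma exists_le_valuation_sum_of_card_le [v.IsTrivialOn k] {D : Derivation k F F}
    (hD : ∀ x, v (D x) ≤ v x) (hker : ∀ x, D x = 0 → x ∈ Set.range (algebraMap k F))
    {W : Submodule k F} (hW : W.FG) (n : ℕ) {V : Submodule k F} (hV : V.FG) :
    ∃ C, ∀ (T : Finset ι) (x u : ι → F), T.card ≤ n → (∀ i, x i ∈ V) →
      (∀ i, u i ≠ 0) → (∀ i, D (u i) / u i ∈ W) → LinearIndepOn k (x * u) T →
      ∀ i ∈ T, v (u i) ≤ C * v (∑ i ∈ T, x i * u i) := by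
  classical
  induction n generalizing V with
  | zero =>
    refine ⟨0, fun T x u hT _ _ _ _ i hi ↦ ?_⟩
    rw [Finset.card_eq_zero.1 (Nat.le_zero.1 hT)] at hi
    exact absurd hi (Finset.notMem_empty i)
  | succ n ih =>
    obtain ⟨C, hC⟩ := exists_valuation_bound v hV
    obtain ⟨C', hC'⟩ := ih (hV.mul ((hV.map (D : F →ₗ[k] F)).sup (hV.mul hW)))
    refine ⟨max C (C' * C), fun T x u hT hx hu huW hind i hi ↦ ?_⟩
    rcases (T.erase i).eq_empty_or_nonempty with hT₁ | ⟨j, hj⟩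
    · have hxi : x i ≠ 0 := left_ne_zero_of_mul (hind.ne_zero (Finset.mem_coe.2 hi))
      rw [← Finset.insert_erase hi, hT₁, insert_empty_eq, Finset.sum_singleton, map_mul,
        ← mul_assoc]
      refine le_mul_of_one_le_left' (((hC _ (hx i)).2 hxi).trans ?_)
      exact mul_le_mul_left (le_max_left _ _) _
    obtain ⟨hij, hj⟩ := Finset.mem_erase.1 hj
    obtain ⟨x', hx', hind', hsum⟩ := exists_wronskian_coefficients hker hx hu huW hind hj
    have hcard : (T.erase j).card ≤ n := by
      rw [Finset.card_erase_of_mem hj]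
      omega
    have hle : v (∑ i ∈ T.erase j, x' i * u i) ≤ C * v (∑ i ∈ T, x i * u i) :=
      (valuation_le_of_wronskian_eq v hD (hu j) hsum).trans (mul_le_mul_left (hC _ (hx j)).1 _)
    calc v (u i) ≤ C' * v (∑ i ∈ T.erase j, x' i * u i) :=
          hC' _ x' u hcard hx' hu huW hind' i (Finset.mem_erase.2 ⟨hij.symm, hi⟩)
      _ ≤ C' * (C * v (∑ i ∈ T, x i * u i)) := mul_le_mul_right hle _
      _ ≤ max C (C' * C) * v (∑ i ∈ T, x i * u i) := by
          rw [← mul_assoc]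
          exact mul_le_mul_left (le_max_right _ _) _

end Wronskian

lemma transcendental_of_notMem_range {k F : Type*} [Field k] [IsAlgClosed k] [Field F] [Algebra k F]
    {x : F} (hx : x ∉ Set.range (algebraMap k F)) : Transcendental k x := by
  intro halg
  refine hx (minpoly.mem_range_of_degree_eq_one k x ?_)
  exact IsAlgClosed.degree_eq_one_of_irreducible k (minpoly.irreducible halg.isIntegral)

section Derivation

lemma exists_derivation_extending {R S T : Type*} [CommRing R] [CommRing S] [CommRing T]
    [Algebra R S] [Algebra R T] [Algebra S T] [IsScalarTower R S T] [Algebra.FormallyEtale S T]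
    (d : Derivation R S T) : ∃ D : Derivation R T T, ∀ s, D (algebraMap S T s) = d s := by
  have hbase := KaehlerDifferential.isBaseChange_of_formallyEtale R S T
  refine ⟨(hbase.lift d.liftKaehlerDifferential).compDer (KaehlerDifferential.D R T), fun s ↦ ?_⟩
  have h := hbase.lift_eq d.liftKaehlerDifferential (KaehlerDifferential.D R S s)
  rwa [KaehlerDifferential.map_D, d.liftKaehlerDifferential_comp_D] at h

variable {k F : Type*} [Field k] [Field F] [Algebra k F]

open scoped IntermediateField.algebraAdjoinAdjoin in
lemma exists_derivation_apply_eq {p : F} (hp : Transcendental k p) [Algebra.IsSeparable k⟮p⟯ F]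
    (y : F) : ∃ D : Derivation k F F, D p = y := by
  let e := algEquivOfTranscendental k p hp
  have he : ∀ s, aeval p (e.symm s) = (s : F) := fun s ↦ by
    obtain ⟨r, rfl⟩ := e.surjective s
    simp [e]
  have : Algebra.FormallyEtale (Algebra.adjoin k {p}) k⟮p⟯ := .of_isLocalization (nonZeroDivisors _)
  have : Algebra.FormallyEtale k⟮p⟯ F := .of_isSeparable _ _
  have : Algebra.FormallyEtale (Algebra.adjoin k {p}) F := .comp _ k⟮p⟯ _
  let d : Derivation k (Algebra.adjoin k {p}) F := .mk'
    (LinearMap.mulRight k y ∘ₗ (aeval p).toLinearMap ∘ₗ derivative ∘ₗ e.symm.toLinearMap)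
      fun a b ↦ by
        simp only [LinearMap.comp_apply, AlgEquiv.toLinearMap_apply, AlgHom.toLinearMap_apply,
          LinearMap.mulRight_apply, map_mul, derivative_mul, map_add, he, Algebra.smul_def,
          Subalgebra.algebraMap_def, Algebra.algebraMap_self_apply]
        ring
  obtain ⟨D, hD⟩ := exists_derivation_extending d
  refine ⟨D, (hD ⟨p, Algebra.self_mem_adjoin_singleton k p⟩).trans ?_⟩
  simp [d, e]

/-- The field of constants of a derivation of a field. -/
def constantField (D : Derivation k F F) : IntermediateField k F where
  carrier := {x | D x = 0}
  mul_mem' {x y} hx hy := by simp_all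
  add_mem' {x y} hx hy := by simp_all
  algebraMap_mem' := D.map_algebraMap
  inv_mem' x hx := by simp_all [D.leibniz_inv]

lemma mem_constantField {D : Derivation k F F} {x : F} : x ∈ constantField D ↔ D x = 0 := Iff.rfl

lemma derivation_eq_zero_of_isSeparable (D : Derivation k F F)
    [Algebra.IsSeparable (constantField D) F] : D = 0 := by
  have : Algebra.FormallyUnramified (constantField D) F := .of_isSeparable _ _
  let L : F →ₗ[constantField D] F :=
    { D with
      map_smul' := fun c x ↦ by
        simp [Algebra.smul_def, mem_constantField.1 c.2] }
  let D' : Derivation (constantField D) F F := .mk' L D.leibniz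
  ext x
  have h := congrArg D'.liftKaehlerDifferential
    (Subsingleton.elim (KaehlerDifferential.D (constantField D) F x) 0)
  rwa [D'.liftKaehlerDifferential_comp_D, map_zero] at h

lemma mem_range_of_derivation_eq_zero [IsAlgClosed k] [CharZero k]
    (hF : ∀ x : F, Transcendental k x → Algebra.IsAlgebraic k⟮x⟯ F) {D : Derivation k F F}
    (hD : D ≠ 0) {x : F} (hx : D x = 0) : x ∈ Set.range (algebraMap k F) := by
  by_contra hmem
  have htr := transcendental_of_notMem_range hmem
  have := hF x htr
  have hle : k⟮x⟯ ≤ constantField D := IntermediateField.adjoin_simple_le_iff.2 hx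
  have : Algebra.IsAlgebraic (constantField D) F :=
    ⟨fun y ↦ (Algebra.IsAlgebraic.isAlgebraic y).tower_top_of_subalgebra_le hle⟩
  have : CharZero (constantField D) := charZero_of_injective_algebraMap (algebraMap k _).injective
  exact hD (derivation_eq_zero_of_isSeparable D)

end Derivation

section Residue

variable {k F : Type*} [Field k] [IsAlgClosed k] [Field F] [Algebra k F]

lemma aeval_mem_of_forall_sub_mem (S : Submonoid F) (hconst : ∀ c : k, c ≠ 0 → algebraMap k F c ∈ S)
    {x : F} (hx : ∀ c : k, x - algebraMap k F c ∈ S) {r : k[X]} (hr : r ≠ 0) : aeval x r ∈ S := by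
  rw [(IsAlgClosed.splits r).eq_prod_roots, map_mul, aeval_C, map_multiset_prod, Multiset.map_map]
  refine S.mul_mem (hconst _ (leadingCoeff_ne_zero.2 hr)) (S.multiset_prod_mem _ fun y hy ↦ ?_)
  obtain ⟨c, -, rfl⟩ := Multiset.mem_map.1 hy
  simpa using hx c

lemma mem_of_mem_adjoin_simple (S : Submonoid F) (hinv : ∀ y ∈ S, y⁻¹ ∈ S)
    (hconst : ∀ c : k, c ≠ 0 → algebraMap k F c ∈ S) {x : F}
    (hx : ∀ c : k, x - algebraMap k F c ∈ S) {y : F} (hy : y ∈ k⟮x⟯) (hy0 : y ≠ 0) : y ∈ S := by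
  obtain ⟨r, s, rfl⟩ := (IntermediateField.mem_adjoin_simple_iff k y).1 hy
  rw [div_eq_mul_inv]
  refine S.mul_mem (aeval_mem_of_forall_sub_mem S hconst hx ?_)
    (hinv _ (aeval_mem_of_forall_sub_mem S hconst hx ?_)) <;>
  · rintro rfl
    simp at hy0

variable {Γ : Type*} [LinearOrderedCommGroupWithZero Γ] (v : Valuation F Γ) [v.IsTrivialOn k]

lemma exists_valuation_sub_algebraMap_lt_one
    (hF : ∀ x : F, Transcendental k x → Algebra.IsAlgebraic k⟮x⟯ F)
    {p : F} (hp0 : p ≠ 0) (hp1 : v p ≠ 1) {x : F} (hx : v x ≤ 1) :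
    ∃ c : k, v (x - algebraMap k F c) < 1 := by
  by_contra! hge
  have hconst : ∀ c : k, v (algebraMap k F c) ≤ 1 := fun c ↦ by
    simpa only [Algebra.smul_def, mul_one, map_one] using valuation_smul_le v c 1
  have hone : ∀ c : k, v (x - algebraMap k F c) = 1 := fun c ↦
    (v.map_sub_le hx (hconst c)).antisymm (hge c)
  let S : Submonoid F :=
    { carrier := {y | v y = 1}
      mul_mem' := fun {y z} hy hz ↦ by simp_all
      one_mem' := map_one v }
  have hS : ∀ y ∈ k⟮x⟯, y ≠ 0 → y ∈ S := fun y ↦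
    mem_of_mem_adjoin_simple S (fun y hy ↦ by simp_all [S])
      (Valuation.IsTrivialOn.eq_one (v := v)) hone
  have : v.IsTrivialOn k⟮x⟯ := ⟨fun y hy ↦ hS y y.2 (by simpa using hy)⟩
  have htr : Transcendental k x := transcendental_of_notMem_range fun ⟨c, hc⟩ ↦ by
    simpa [hc] using hone c
  have := hF x htr
  exact Valuation.transcendental_of_ne_one k⟮x⟯ p hp0 hp1 (Algebra.IsAlgebraic.isAlgebraic p)

end Residue

/-- A place of `F` over `k`, as a normalized discrete valuation that is trivial on `k`. -/
class IsPlace (k : Type*) {F : Type*} [Field k] [Field F] [Algebra k F] (v : Valuation F ℤᵐ⁰) : Prop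
    extends v.IsTrivialOn k where
  exists_uniformizer : ∃ p, v p = exp (-1 : ℤ)

section DerivationBound

variable {k F Γ : Type*} [Field k] [Field F] [Algebra k F] [LinearOrderedCommGroupWithZero Γ]
  (v : Valuation F Γ) {D : Derivation k F F}

lemma valuation_derivation_mul_le {x y : F} (hx : v (D x) ≤ v x) (hy : v (D y) ≤ v y) :
    v (D (x * y)) ≤ v (x * y) := by
  rw [D.leibniz, smul_eq_mul, smul_eq_mul]
  refine v.map_add_le ?_ ?_
  · rw [map_mul, map_mul]
    exact mul_le_mul_right hy _
  · rw [mul_comm, map_mul, map_mul]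
    exact mul_le_mul_left hx _

lemma valuation_derivation_inv_le {x : F} (hx : v (D x) ≤ v x) : v (D x⁻¹) ≤ v x⁻¹ := by
  rcases eq_or_ne x 0 with rfl | hx0
  · simp
  calc v (D x⁻¹) = v (x⁻¹ ^ 2) * v (D x) := by
        rw [D.leibniz_inv, smul_eq_mul, map_mul, Valuation.map_neg]
    _ ≤ v (x⁻¹ ^ 2) * v x := mul_le_mul_right hx _
    _ = v x⁻¹ := by rw [← map_mul, sq, mul_assoc, inv_mul_cancel₀ hx0, mul_one]

end DerivationBound

section Density

variable {k F Γ : Type*} [Field k] [Field F] [Algebra k F] [LinearOrderedCommGroupWithZero Γ]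
  [Valued F Γ]

lemma continuous_polynomialModule_eval (Q : PolynomialModule F F) :
    Continuous fun y ↦ PolynomialModule.eval y Q := by
  induction Q using PolynomialModule.induction_linear with
  | zero =>
    simp only [map_zero]
    fun_prop
  | add Q R hQ hR =>
    simp only [map_add]
    fun_prop
  | single n a =>
    simp only [PolynomialModule.eval_single, smul_eq_mul]
    fun_prop

lemma tendsto_zero_of_valuation_le {ι : Type*} {l : Filter ι} {f g : ι → F}
    (hf : Tendsto f l (𝓝 0)) (hle : ∀ᶠ i in l, Valued.v (g i) ≤ Valued.v (f i)) :
    Tendsto g l (𝓝 0) := by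
  refine tendsto_def.2 fun s hs ↦ ?_
  obtain ⟨γ, hγ⟩ := Valued.mem_nhds_zero.1 hs
  filter_upwards [hf (Valued.mem_nhds_zero.2 ⟨γ, subset_rfl⟩), hle] with i hi hle
  exact hγ ((Valued.v.restrict_le_iff.2 hle).trans_lt hi)

-- If `P` is the minimal polynomial of `y` over the dense subfield, then differentiating `P q`
-- expresses `D q` through `P q`, `q` and `D (P q)`, so `D q → D y` as `q → y` in the subfield.
lemma valuation_derivation_le_of_dense {D : Derivation k F F} (K : IntermediateField k F)
    [Algebra.IsSeparable K F] (hK : Dense (K : Set F))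
    (hD : ∀ x ∈ K, Valued.v (D x) ≤ Valued.v x) (y : F) : Valued.v (D y) ≤ Valued.v y := by
  rcases eq_or_ne y 0 with rfl | hy
  · simp
  let P := (minpoly K y).map (algebraMap K F)
  have hP : P.eval y = 0 := by rw [eval_map_algebraMap, minpoly.aeval]
  have hP' : P.derivative.eval y ≠ 0 := by
    rw [derivative_map, eval_map_algebraMap]
    exact (Algebra.IsSeparable.isSeparable K y).aeval_derivative_ne_zero (minpoly.aeval K y)
  have hQ := fun q ↦ D.apply_eval_eq q P
  have : (𝓝[K] y).NeBot := mem_closure_iff_nhdsWithin_neBot.1 (hK y)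
  have hid : Tendsto id (𝓝[K] y) (𝓝 y) := tendsto_id.mono_left nhdsWithin_le_nhds
  have heval (R : F[X]) : Tendsto (R.eval ·) (𝓝[K] y) (𝓝 (R.eval y)) :=
    R.continuous.continuousAt.tendsto.comp hid
  have hDP : Tendsto (fun q ↦ D (P.eval q)) (𝓝[K] y) (𝓝 0) := by
    refine tendsto_zero_of_valuation_le (hP ▸ heval P) ?_
    filter_upwards [self_mem_nhdsWithin] with q hq
    lift q to K using hq
    rw [eval_map_algebraMap, ← K.algebraMap_apply q, aeval_algebraMap_apply]
    exact hD _ (SetLike.coe_mem _)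
  have hlim : Tendsto D (𝓝[K] y) (𝓝 (D y)) := by
    have h := (hDP.sub ((continuous_polynomialModule_eval (D.mapCoeffs P)).continuousAt.tendsto.comp
      hid)).div (heval P.derivative) hP'
    rw [← D.map_zero, ← hP, hQ, add_sub_cancel_left, smul_eq_mul, mul_div_cancel_left₀ _ hP'] at h
    refine h.congr' ?_
    filter_upwards [(heval P.derivative).eventually_ne hP'] with q hq
    simp only [hQ, Pi.div_apply, Function.comp_apply, id_eq]
    rw [add_sub_cancel_left, smul_eq_mul, mul_div_cancel_left₀ _ hq]
  rcases eq_or_ne (D y) 0 with hDy | hDy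
  · simp [hDy]
  obtain ⟨q, hqK, hq, hDq⟩ := ((eventually_mem_nhdsWithin (a := y)).and
    ((hid.eventually (Valued.locally_const (Valued.v.ne_zero_iff.2 hy))).and
      (hlim.eventually (Valued.locally_const (Valued.v.ne_zero_iff.2 hDy))))).exists
  exact hDq ▸ hq ▸ hD q hqK

end Density

section Place

variable {k F : Type*} [Field k] [Field F] [Algebra k F] (v : Valuation F ℤᵐ⁰)
  {p : F} (hp : v p = exp (-1 : ℤ))

include hp in
lemma ne_zero_of_uniformizer : p ≠ 0 :=
  v.ne_zero_iff.1 (hp ▸ exp_ne_zero)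

include hp in
lemma valuation_ne_one_of_uniformizer : v p ≠ 1 := by
  rw [hp, ne_eq, exp_eq_one]
  decide

include hp in
lemma lt_one_iff_le_uniformizer {x : ℤᵐ⁰} : x < 1 ↔ x ≤ v p := by
  rw [hp, ← lt_mul_exp_iff_le exp_ne_zero, ← exp_add]
  rfl

variable [v.IsTrivialOn k]

include hp in
lemma transcendental_of_uniformizer : Transcendental k p :=
  Valuation.transcendental_of_ne_one k p (ne_zero_of_uniformizer v hp)
    (valuation_ne_one_of_uniformizer v hp)

variable [IsAlgClosed k] (hF : ∀ x : F, Transcendental k x → Algebra.IsAlgebraic k⟮x⟯ F)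

include hF hp in
lemma exists_mem_adjoin_valuation_sub_le (x : F) :
    ∃ r ∈ k⟮p⟯, v (x - r) ≤ v p * v x := by
  rcases eq_or_ne x 0 with rfl | hx
  · exact ⟨0, zero_mem _, by simp⟩
  have hvx : v x ≠ 0 := v.ne_zero_iff.2 hx
  let q := p ^ (-(v x).log)
  have hq : v q = v x := by
    rw [map_zpow₀, hp, ← exp_zsmul, smul_eq_mul, mul_neg_one, neg_neg, exp_log hvx]
  have hq0 : q ≠ 0 := v.ne_zero_iff.1 (hq ▸ hvx)
  obtain ⟨c, hc⟩ := exists_valuation_sub_algebraMap_lt_one (k := k) v hF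
    (ne_zero_of_uniformizer v hp) (valuation_ne_one_of_uniformizer v hp) (x := x / q)
    (by rw [map_div₀, hq, div_self hvx])
  refine ⟨algebraMap k F c * q, mul_mem (algebraMap_mem _ c)
    (zpow_mem (IntermediateField.mem_adjoin_simple_self k p) _), ?_⟩
  have hdiff : x - algebraMap k F c * q = (x / q - algebraMap k F c) * q := by field
  rw [hdiff, map_mul, hq]
  exact mul_le_mul_left ((lt_one_iff_le_uniformizer v hp).1 hc) _

include hF hp in
lemma exists_mem_adjoin_valuation_sub_le_pow (n : ℕ) (x : F) :
    ∃ r ∈ k⟮p⟯, v (x - r) ≤ v p ^ n * v x := by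
  induction n with
  | zero => exact ⟨0, zero_mem _, by simp⟩
  | succ n ih =>
    obtain ⟨r, hr, hxr⟩ := ih
    obtain ⟨s, hs, hxs⟩ := exists_mem_adjoin_valuation_sub_le v hp hF (x - r)
    refine ⟨r + s, add_mem hr hs, ?_⟩
    rw [← sub_sub, pow_succ', mul_assoc]
    exact hxs.trans (mul_le_mul_right hxr _)

include hF hp in
lemma exists_mem_adjoin_valuation_sub_lt (x : F) {γ : ℤᵐ⁰} (hγ : γ ≠ 0) :
    ∃ r ∈ k⟮p⟯, v (x - r) < γ := by
  rcases eq_or_ne x 0 with rfl | hx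
  · exact ⟨0, zero_mem _, by simpa [zero_lt_iff] using hγ⟩
  have hvx : v x ≠ 0 := v.ne_zero_iff.2 hx
  obtain ⟨n, hn⟩ := exists_pow_lt₀ ((lt_one_iff_le_uniformizer v hp).2 le_rfl)
    (Units.mk0 (γ / v x) (div_ne_zero hγ hvx))
  obtain ⟨r, hr, hxr⟩ := exists_mem_adjoin_valuation_sub_le_pow v hp hF n x
  exact ⟨r, hr, hxr.trans_lt ((lt_div_iff₀ (zero_lt_iff.2 hvx)).1 hn)⟩

include hF hp in
lemma dense_adjoin_uniformizer :
    @Dense F (Valued.mk' v).toUniformSpace.toTopologicalSpace (k⟮p⟯ : Set F) := by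
  let : Valued F ℤᵐ⁰ := Valued.mk' v
  intro x
  rw [mem_closure_iff_nhds]
  intro s hs
  obtain ⟨γ, hγ⟩ := Valued.mem_nhds.1 hs
  obtain ⟨r, hr, hxr⟩ := exists_mem_adjoin_valuation_sub_lt v hp hF x
    (γ := MonoidWithZeroHom.ValueGroup₀.embedding γ.1) (by simp)
  refine ⟨r, hγ ?_, hr⟩
  rw [Set.mem_ofPred, Valuation.restrict_lt_iff_lt_embedding, Valuation.map_sub_swap]
  exact hxr

include hp in
-- Both sides are multiplicative, so it suffices to check the factors `p - c`.
lemma valuation_derivation_le_of_mem_adjoin {D : Derivation k F F} (hD : D p = p) {x : F}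
    (hx : x ∈ k⟮p⟯) : v (D x) ≤ v x := by
  rcases eq_or_ne x 0 with rfl | hx0
  · simp
  let S : Submonoid F :=
    { carrier := {x | v (D x) ≤ v x}
      mul_mem' := valuation_derivation_mul_le v
      one_mem' := by simp }
  refine mem_of_mem_adjoin_simple S (fun y hy ↦ valuation_derivation_inv_le v hy) (fun c _ ↦ ?_)
    (fun c ↦ ?_) hx hx0
  · change v (D (algebraMap k F c)) ≤ _
    simp
  · change v (D (p - algebraMap k F c)) ≤ v (p - algebraMap k F c)
    rw [D.map_sub, D.map_algebraMap, hD, sub_zero]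
    rcases eq_or_ne c 0 with rfl | hc
    · simp
    have hlt : v p < v (algebraMap k F c) := by
      rw [Valuation.IsTrivialOn.eq_one c hc]
      exact (lt_one_iff_le_uniformizer v hp).2 le_rfl
    rw [v.map_sub_eq_of_lt_right hlt]
    exact hlt.le

omit [v.IsTrivialOn k] in
include hF in
lemma exists_derivation_valuation_le [CharZero k] [IsPlace k v] :
    ∃ D : Derivation k F F, (∀ x, v (D x) ≤ v x) ∧
      ∀ x, D x = 0 → x ∈ Set.range (algebraMap k F) := by
  obtain ⟨p, hp⟩ := IsPlace.exists_uniformizer k (v := v)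
  have htr := transcendental_of_uniformizer (k := k) v hp
  have := hF p htr
  have : CharZero k⟮p⟯ := charZero_of_injective_algebraMap (algebraMap k _).injective
  obtain ⟨D, hD⟩ := exists_derivation_apply_eq htr p
  refine ⟨D, fun x ↦ ?_, fun x ↦ mem_range_of_derivation_eq_zero hF ?_⟩
  · let : Valued F ℤᵐ⁰ := Valued.mk' v
    exact valuation_derivation_le_of_dense k⟮p⟯ (dense_adjoin_uniformizer v hp hF)
      (fun x hx ↦ valuation_derivation_le_of_mem_adjoin v hp hD hx) x
  · rintro rfl
    exact ne_zero_of_uniformizer v hp hD.symm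

end Place

section ExistsPlace

lemma exists_heightOneSpectrum_valuation_lt_one {R : Type*} (F : Type*) [CommRing R]
    [IsDedekindDomain R] [Field F] [Algebra R F] [IsFractionRing R F] {b : R} (hb : ¬ IsUnit b)
    (hb0 : b ≠ 0) :
    ∃ P : IsDedekindDomain.HeightOneSpectrum R, P.valuation F (algebraMap R F b) < 1 := by
  obtain ⟨M, hM, hbM⟩ := exists_max_ideal_of_mem_nonunits hb
  exact ⟨⟨M, hM.isPrime, ne_of_mem_of_not_mem' hbM hb0⟩,
    (IsDedekindDomain.HeightOneSpectrum.valuation_lt_one_iff_mem _ b).2 hbM⟩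

-- The valuation comes from a maximal ideal of the integral closure of `A` that contains `a`.
lemma exists_valuation_lt_one_of_isDedekindDomain {A : Type*} (K F : Type*) [CommRing A]
    [IsDedekindDomain A] [Field K] [Algebra A K] [IsFractionRing A K] [Field F] [Algebra K F]
    [Algebra A F] [IsScalarTower A K F] [FiniteDimensional K F] [Algebra.IsSeparable K F] {a : A}
    (ha : ¬ IsUnit a) (ha0 : a ≠ 0) :
    ∃ v : Valuation F ℤᵐ⁰, (∀ x, v (algebraMap A F x) ≤ 1) ∧ v (algebraMap A F a) < 1 ∧
      ∃ p, v p = exp (-1 : ℤ) := by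
  have := integralClosure.isDedekindDomain A K F
  have : IsFractionRing (integralClosure A F) F :=
    integralClosure.isFractionRing_of_finite_extension K F
  have : FaithfulSMul A F := .trans A K F
  obtain ⟨P, hP⟩ := exists_heightOneSpectrum_valuation_lt_one F
    (b := algebraMap A (integralClosure A F) a) (by rwa [isUnit_map_iff])
    (by rwa [ne_eq, FaithfulSMul.algebraMap_eq_zero_iff])
  exact ⟨P.valuation F, fun x ↦ P.valuation_le_one (algebraMap A (integralClosure A F) x), hP,
    P.valuation_exists_uniformizer F⟩

variable {k F : Type*} [Field k] [Field F] [Algebra k F]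

lemma isTrivialOn_of_forall_le_one {Γ : Type*} [LinearOrderedCommGroupWithZero Γ]
    {v : Valuation F Γ} (hv : ∀ c : k, v (algebraMap k F c) ≤ 1) : v.IsTrivialOn k where
  eq_one c hc := by
    refine (hv c).antisymm ?_
    have h := hv c⁻¹
    rwa [map_inv₀, map_inv₀, inv_le_one₀ (by simpa [zero_lt_iff] using hc)] at h

open scoped IntermediateField.algebraAdjoinAdjoin in
lemma exists_isPlace_valuation_lt_one {g : F} (hg : Transcendental k g) [FiniteDimensional k⟮g⟯ F]
    [Algebra.IsSeparable k⟮g⟯ F] : ∃ v : Valuation F ℤᵐ⁰, IsPlace k v ∧ v g < 1 := by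
  let e := algEquivOfTranscendental k g hg
  have : IsPrincipalIdealRing (Algebra.adjoin k {g}) := .of_surjective e e.surjective
  obtain ⟨v, hv, hlt, hp⟩ := exists_valuation_lt_one_of_isDedekindDomain k⟮g⟯ F (a := e X)
    (by simpa using not_isUnit_X) (by simp)
  have : v.IsTrivialOn k := isTrivialOn_of_forall_le_one fun c ↦ hv (algebraMap k _ c)
  exact ⟨v, ⟨hp⟩, by simpa [e] using hlt⟩

end ExistsPlace

section Circuit

variable {k M ι : Type*} [Field k] [AddCommGroup M] [Module k M] {y : ι → M}

lemma exists_finsupp_of_notMem_span_diff {T : Set ι} {f : M} (hf : f ∈ Submodule.span k (y '' T))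
    {i : ι} (hi : f ∉ Submodule.span k (y '' (T \ {i}))) :
    ∃ c : ι →₀ k, ↑c.support ⊆ T ∧ i ∈ c.support ∧ ∑ j ∈ c.support, c j • y j = f := by
  obtain ⟨c, hc, rfl⟩ := (Finsupp.mem_span_image_iff_linearCombination k).1 hf
  refine ⟨c, hc, ?_, rfl⟩
  by_contra hci
  exact hi ((Finsupp.mem_span_image_iff_linearCombination k).2
    ⟨c, Set.subset_sdiff_singleton hc hci, rfl⟩)

lemma exists_minimal_linearIndepOn_of_mem_span [Finite ι] {f : M} {S : Set ι}
    (hf : f ∈ Submodule.span k (y '' S)) :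
    ∃ b ⊆ S, LinearIndepOn k y b ∧ f ∈ Submodule.span k (y '' b) ∧
      ∀ i ∈ b, f ∉ Submodule.span k (y '' (b \ {i})) := by
  obtain ⟨b, hbS, hb⟩ :=
    exists_minimal_le_of_wellFoundedLT (fun b ↦ f ∈ Submodule.span k (y '' b)) S hf
  have hmin : ∀ i ∈ b, f ∉ Submodule.span k (y '' (b \ {i})) := fun i hi hfi ↦
    (hb.le_of_le hfi Set.sdiff_subset hi).2 rfl
  refine ⟨b, hbS, linearIndepOn_iff_notMem_span.2 fun i hi hyi ↦ hmin i hi ?_, hb.prop, hmin⟩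
  have hspan := Submodule.span_insert_eq_span hyi
  rw [← Set.image_insert_eq, Set.insert_sdiff_self_of_mem hi] at hspan
  exact hspan ▸ hb.prop

lemma mem_span_exchange {b : Set ι} {i j : ι} (hi : i ∈ b)
    (hj : y j ∈ Submodule.span k (y '' b)) (hji : y j ∉ Submodule.span k (y '' (b \ {i}))) :
    y i ∈ Submodule.span k (y '' insert j (b \ {i})) := by
  rw [Set.image_insert_eq]
  rw [← Set.insert_sdiff_self_of_mem hi, Set.image_insert_eq] at hj
  exact mem_span_insert_exchange hj hji

end Circuit

/-- `x` and `y` have the same `v`-adic size up to the factor `C`. -/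
def Comparable {R Γ : Type*} [CommRing R] [LinearOrderedCommGroupWithZero Γ] (v : Valuation R Γ)
    (C : Γ) (x y : R) : Prop :=
  v x ≤ C * v y ∧ v y ≤ C * v x

lemma Comparable.mono {R Γ : Type*} [CommRing R] [LinearOrderedCommGroupWithZero Γ]
    {v : Valuation R Γ} {C C' : Γ} {x y : R} (h : Comparable v C x y) (hC : C ≤ C') :
    Comparable v C' x y :=
  ⟨h.1.trans (mul_le_mul_left hC _), h.2.trans (mul_le_mul_left hC _)⟩

/-- Some pair of places `v`, `w` (possibly equal) tells the families `f` and `g` apart along `l`: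
for every factor `C`, eventually `f` and `g` are not comparable at both of them. -/
def Separated (k : Type*) {F τ : Type*} [Field k] [Field F] [Algebra k F] (l : Filter τ)
    (f g : τ → F) : Prop :=
  ∃ v w : Valuation F ℤᵐ⁰, IsPlace k v ∧ IsPlace k w ∧
    ∀ C, ∀ᶠ t in l, ¬ (Comparable v C (f t) (g t) ∧ Comparable w C (f t) (g t))

section ExponentialSum

variable {k F ι : Type*} [Field k] [IsAlgClosed k] [CharZero k] [Field F] [Algebra k F]
  (hF : ∀ x : F, Transcendental k x → Algebra.IsAlgebraic k⟮x⟯ F)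
  (v : Valuation F ℤᵐ⁰) [IsPlace k v] {V : Submodule k F} (hV : V.FG) {γ : ι → F}
  (hγ : ∀ i, γ i ≠ 0)

include hF hV hγ

lemma exists_pow_le_of_mem_span [Finite ι] :
    ∃ C, ∀ (x : ι → F) (e : ι → ℕ), (∀ i, x i ∈ V) → ∀ (T : Set ι) (f : F) (i : ι),
      LinearIndepOn k (fun i ↦ x i * γ i ^ e i) T →
      f ∈ Submodule.span k ((fun i ↦ x i * γ i ^ e i) '' T) →
      f ∉ Submodule.span k ((fun i ↦ x i * γ i ^ e i) '' (T \ {i})) →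
      v (γ i ^ e i) ≤ C * v f := by
  have := Fintype.ofFinite ι
  obtain ⟨D, hD, hker⟩ := exists_derivation_valuation_le v hF
  let W := Submodule.span k (Set.range fun i ↦ D (γ i) / γ i)
  have hW : W.FG := Submodule.fg_span (Set.finite_range _)
  have hpow : ∀ i n, D (γ i ^ n) / γ i ^ n ∈ W := fun i n ↦ by
    have hlog : D (γ i ^ n) / γ i ^ n = n • (D (γ i) / γ i) := by
      cases n with
      | zero => simp
      | succ n =>
        rw [D.leibniz_pow, smul_eq_mul, nsmul_eq_mul, nsmul_eq_mul, Nat.add_sub_cancel]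
        have := hγ i
        field
    exact hlog ▸ nsmul_mem (Submodule.subset_span (Set.mem_range_self i)) n
  obtain ⟨C, hC⟩ := exists_le_valuation_sum_of_card_le (ι := ι) v hD hker hW (Fintype.card ι) hV
  refine ⟨C, fun x e hx T f i hT hf hfi ↦ ?_⟩
  obtain ⟨c, hcT, hci, rfl⟩ := exists_finsupp_of_notMem_span_diff hf hfi
  have hind : LinearIndepOn k ((fun i ↦ c i • x i) * fun i ↦ γ i ^ e i) c.support := by
    simp only [Pi.mul_def, smul_mul_assoc]
    exact (hT.mono hcT).units_smul fun j ↦ Units.mk0 (c j) (Finsupp.mem_support_iff.1 j.2)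
  simp only [← smul_mul_assoc]
  exact hC c.support _ _ (Finset.card_le_univ _) (fun i ↦ V.smul_mem _ (hx i))
    (fun i ↦ pow_ne_zero _ (hγ i)) (fun i ↦ hpow i _) hind i hci

lemma exists_comparable_of_mem_span [Finite ι] :
    ∃ C, ∀ (x : ι → F) (e : ι → ℕ), (∀ i, x i ∈ V) → ∀ (b : Set ι) (i j : ι), i ∈ b → j ∉ b →
      LinearIndepOn k (fun i ↦ x i * γ i ^ e i) b →
      x j * γ j ^ e j ∈ Submodule.span k ((fun i ↦ x i * γ i ^ e i) '' b) →
      x j * γ j ^ e j ∉ Submodule.span k ((fun i ↦ x i * γ i ^ e i) '' (b \ {i})) →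
      Comparable v C (γ j ^ e j) (γ i ^ e i) := by
  obtain ⟨C, hC⟩ := exists_pow_le_of_mem_span hF v hV hγ
  obtain ⟨C', hC'⟩ := exists_valuation_bound v hV
  have hbound : ∀ (x : ι → F) (e : ι → ℕ), (∀ i, x i ∈ V) → ∀ i,
      C * v (x i * γ i ^ e i) ≤ C * C' * v (γ i ^ e i) := fun x e hx i ↦ by
    rw [map_mul, mul_assoc]
    exact mul_le_mul_right (mul_le_mul_left (hC' _ (hx i)).1 _) _
  refine ⟨C * C', fun x e hx b i j hi hj hb hjb hji ↦ ⟨?_, ?_⟩⟩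
  · have hdiff : insert j (b \ {i}) \ {j} = b \ {i} :=
      Set.insert_sdiff_self_of_notMem fun h ↦ hj h.1
    refine (hC x e hx (insert j (b \ {i})) _ j ?_ (mem_span_exchange hi hjb hji) ?_).trans
      (hbound x e hx i)
    · exact (hb.mono Set.sdiff_subset).insert hji
    · rw [hdiff]
      exact linearIndepOn_iff_notMem_span.1 hb i hi
  · exact (hC x e hx b _ i hb hjb hji).trans (hbound x e hx j)

lemma exists_pow_le_sum [Fintype ι] :
    ∃ C, ∀ (x : ι → F) (e : ι → ℕ), (∀ i, x i ∈ V) → ∀ j : ι,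
      x j * γ j ^ e j ∉ Submodule.span k ((fun i ↦ x i * γ i ^ e i) '' {j}ᶜ) →
      v (γ j ^ e j) ≤ C * v (∑ i, x i * γ i ^ e i) := by
  obtain ⟨C, hC⟩ := exists_pow_le_of_mem_span hF v hV hγ
  refine ⟨C, fun x e hx j hj ↦ ?_⟩
  classical
  let y := fun i ↦ x i * γ i ^ e i
  obtain ⟨b, hbj, -, hspan, hb⟩ :=
    exists_linearIndepOn_extension (linearIndepOn_empty k y) (Set.empty_subset {j}ᶜ)
  have hjb : y j ∉ Submodule.span k (y '' b) := fun h ↦ hj (Submodule.span_mono (by gcongr) h)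
  have hrest : ∑ i ∈ Finset.univ.erase j, y i ∈ Submodule.span k (y '' b) :=
    sum_mem fun i hi ↦ hspan ⟨i, Finset.ne_of_mem_erase hi, rfl⟩
  have hsum : ∑ i, y i = y j + ∑ i ∈ Finset.univ.erase j, y i :=
    (Finset.add_sum_erase _ _ (Finset.mem_univ j)).symm
  refine hC x e hx (insert j b) _ j (hb.insert hjb) ?_ ?_
  · rw [hsum]
    exact add_mem (Submodule.subset_span ⟨j, Set.mem_insert j b, rfl⟩)
      (Submodule.span_mono (by gcongr; exact Set.subset_insert j b) hrest)
  · rw [Set.insert_sdiff_self_of_notMem fun h ↦ hbj h rfl, hsum]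
    exact fun h ↦ hjb ((Submodule.add_mem_iff_left _ hrest).1 h)

omit v [IsPlace k v] in
lemma eventually_notMem_span_of_separated [Finite ι] {τ : Type*} {l : Filter τ} {x : τ → ι → F}
    {e : τ → ι → ℕ} (hx : ∀ t i, x t i ∈ V) {j : ι} (hxj : ∀ᶠ t in l, x t j ≠ 0)
    (hsep : ∀ i ≠ j, Separated k l (fun t ↦ γ j ^ e t j) (fun t ↦ γ i ^ e t i)) :
    ∀ᶠ t in l, x t j * γ j ^ e t j ∉
      Submodule.span k ((fun i ↦ x t i * γ i ^ e t i) '' {j}ᶜ) := by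
  have hnot : ∀ i ≠ j, ∀ᶠ t in l, ∀ b : Set ι, i ∈ b → j ∉ b →
      LinearIndepOn k (fun i ↦ x t i * γ i ^ e t i) b →
      x t j * γ j ^ e t j ∈ Submodule.span k ((fun i ↦ x t i * γ i ^ e t i) '' b) →
      x t j * γ j ^ e t j ∈ Submodule.span k ((fun i ↦ x t i * γ i ^ e t i) '' (b \ {i})) := by
    intro i hij
    obtain ⟨v, w, hv, hw, hvw⟩ := hsep i hij
    obtain ⟨C, hC⟩ := exists_comparable_of_mem_span hF v hV hγ
    obtain ⟨C', hC'⟩ := exists_comparable_of_mem_span hF w hV hγ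
    filter_upwards [hvw (max C C')] with t ht b hib hjb hb hjmem
    by_contra hji
    exact ht ⟨(hC _ _ (hx t) b i j hib hjb hb hjmem hji).mono (le_max_left _ _),
      (hC' _ _ (hx t) b i j hib hjb hb hjmem hji).mono (le_max_right _ _)⟩
  filter_upwards [hxj, eventually_all.2 fun i ↦ eventually_all.2 (hnot i)] with t htj ht hmem
  obtain ⟨b, hbj, hb, hjb, hmin⟩ := exists_minimal_linearIndepOn_of_mem_span hmem
  rcases b.eq_empty_or_nonempty with rfl | ⟨i, hi⟩
  · rw [Set.image_empty, Submodule.span_empty, Submodule.mem_bot] at hjb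
    exact mul_ne_zero htj (pow_ne_zero _ (hγ j)) hjb
  · exact hmin i hi (ht i (hbj hi) b hi (fun h ↦ hbj h rfl) hb hjb)

end ExponentialSum

lemma Comparable.abs_log_sub_log_le {R : Type*} [CommRing R] {v : Valuation R ℤᵐ⁰} {C : ℤᵐ⁰}
    {x y : R} (h : Comparable v C x y) (hx : v x ≠ 0) (hy : v y ≠ 0) :
    |log (v x) - log (v y)| ≤ log C := by
  have hC : C ≠ 0 := by
    rintro rfl
    exact hx (by simpa using h.1)
  have hxy := (log_le_log hx (mul_ne_zero hC hy)).2 h.1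
  have hyx := (log_le_log hy (mul_ne_zero hC hx)).2 h.2
  rw [log_mul hC hy] at hxy
  rw [log_mul hC hx] at hyx
  exact abs_sub_le_iff.2 ⟨by linarith, by linarith⟩

lemma Comparable.abs_mul_log_sub_mul_log_le {K : Type*} [Field K] {v : Valuation K ℤᵐ⁰} {C : ℤᵐ⁰}
    {x y : K} {n m : ℕ} (h : Comparable v C (x ^ n) (y ^ m)) (hx : x ≠ 0) (hy : y ≠ 0) :
    |n * log (v x) - m * log (v y)| ≤ log C := by
  have h := h.abs_log_sub_log_le (v.ne_zero_iff.2 (pow_ne_zero n hx))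
    (v.ne_zero_iff.2 (pow_ne_zero m hy))
  rwa [map_pow, map_pow, log_pow, log_pow, nsmul_eq_mul, nsmul_eq_mul] at h

section FunctionField

variable {k F : Type*} [Field k] [Field F] [Algebra k F] [Algebra (RatFunc k) F]
  [IsScalarTower k (RatFunc k) F] (hF : FunctionField k F)

include hF

lemma isAlgebraic_adjoin_of_functionField {g : F} (hg : Transcendental k g) :
    Algebra.IsAlgebraic k⟮g⟯ F := by
  have := hF
  have := FunctionField.finiteDimensional_of_adjoin_transcendental hg
  infer_instance

variable [CharZero k] [IsAlgClosed k]

lemma exists_isPlace_log_valuation_ne_zero {g : F} (hg : g ∉ Set.range (algebraMap k F)) :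
    ∃ v : Valuation F ℤᵐ⁰, IsPlace k v ∧ log (v g) ≠ 0 := by
  have := hF
  have htr := transcendental_of_notMem_range hg
  have := FunctionField.finiteDimensional_of_adjoin_transcendental htr
  obtain ⟨v, hv, hvg⟩ := exists_isPlace_valuation_lt_one htr
  have hg0 : g ≠ 0 := by
    rintro rfl
    exact hg ⟨0, map_zero _⟩
  have hlt := (log_lt_log (v.ne_zero_iff.2 hg0) one_ne_zero).2 hvg
  exact ⟨v, hv, by simpa using hlt.ne⟩

variable {x y : F} (hx : x ≠ 0) (hy : y ≠ 0) {τ : Type*} {l : Filter τ} {n : τ → ℕ}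
  (hn : Tendsto n l atTop)

include hx hy hn

lemma separated_pow_of_div_notMem_range (hxy : x / y ∉ Set.range (algebraMap k F)) :
    Separated k l (fun t ↦ x ^ n t) (fun t ↦ y ^ n t) := by
  obtain ⟨v, hv, hvxy⟩ := exists_isPlace_log_valuation_ne_zero hF hxy
  rw [map_div₀, log_div (v.ne_zero_iff.2 hx) (v.ne_zero_iff.2 hy)] at hvxy
  refine ⟨v, v, hv, hv, fun C ↦ ?_⟩
  filter_upwards [(tendsto_natCast_atTop_atTop.comp hn).eventually_gt_atTop (log C)] with t ht hC
  refine ht.not_ge ?_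
  calc (n t : ℤ) ≤ n t * |log (v x) - log (v y)| :=
        le_mul_of_one_le_right (Int.natCast_nonneg _) (Int.one_le_abs hvxy)
    _ = |n t * log (v x) - n t * log (v y)| := by rw [← mul_sub, abs_mul, Nat.abs_cast]
    _ ≤ log C := hC.1.abs_mul_log_sub_mul_log_le hx hy

-- The second place is chosen so that the vectors `(log (v x), log (w x))` and
-- `(log (v y), log (w y))` are linearly independent; bounding `n t` is then Cramer's rule.
lemma separated_pow_of_multiplicatively_independent
    (hxy : ∀ r s : ℤ, x ^ r * y ^ s ∈ Set.range (algebraMap k F) → r = 0 ∧ s = 0) (m : τ → ℕ) :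
    Separated k l (fun t ↦ x ^ n t) (fun t ↦ y ^ m t) := by
  have hx' : x ∉ Set.range (algebraMap k F) := fun h ↦
    one_ne_zero (hxy 1 0 (by simpa using h)).1
  obtain ⟨v, hv, hvx⟩ := exists_isPlace_log_valuation_ne_zero hF hx'
  have hg : x ^ log (v y) * y ^ (-log (v x)) ∉ Set.range (algebraMap k F) := fun h ↦
    hvx (neg_eq_zero.1 (hxy _ _ h).2)
  obtain ⟨w, hw, hdet⟩ := exists_isPlace_log_valuation_ne_zero hF hg
  rw [map_mul, map_zpow₀, map_zpow₀, log_mul (zpow_ne_zero _ (w.ne_zero_iff.2 hx))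
    (zpow_ne_zero _ (w.ne_zero_iff.2 hy)), log_zpow, log_zpow, smul_eq_mul, smul_eq_mul] at hdet
  refine ⟨v, w, hv, hw, fun C ↦ ?_⟩
  filter_upwards [(tendsto_natCast_atTop_atTop.comp hn).eventually_gt_atTop
    (log C * |log (v y)| + log C * |log (w y)|)] with t ht ⟨hvC, hwC⟩
  refine ht.not_ge ?_
  calc (n t : ℤ) ≤ n t * |log (v y) * log (w x) + -log (v x) * log (w y)| :=
        le_mul_of_one_le_right (Int.natCast_nonneg _) (Int.one_le_abs hdet)
    _ = |(n t * log (w x) - m t * log (w y)) * log (v y) -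
          (n t * log (v x) - m t * log (v y)) * log (w y)| := by
        rw [← Nat.abs_cast (n t), ← abs_mul, Nat.abs_cast]
        congr 1
        ring
    _ ≤ |n t * log (w x) - m t * log (w y)| * |log (v y)| +
          |n t * log (v x) - m t * log (v y)| * |log (w y)| := by
        rw [← abs_mul, ← abs_mul]
        exact abs_sub _ _
    _ ≤ log C * |log (v y)| + log C * |log (w y)| := by
        gcongr
        · exact hwC.abs_mul_log_sub_mul_log_le hx hy
        · exact hvC.abs_mul_log_sub_mul_log_le hx hy

end FunctionField

lemma eventually_eval_natCast_ne_zero {R : Type*} [CommRing R] [IsDomain R] [CharZero R] {p : R[X]}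
    (hp : p ≠ 0) : ∀ᶠ n : ℕ in atTop, p.eval (n : R) ≠ 0 := by
  rw [← Nat.cofinite_eq_atTop]
  exact (finite_setOfPred_isRoot hp).preimage Nat.cast_injective.injOn |>.compl_mem_cofinite

lemma exists_fg_forall_eval_natCast_mem (k : Type*) {A ι : Type*} [CommSemiring k] [Semiring A]
    [Algebra k A] [Finite ι] (p : ι → A[X]) :
    ∃ V : Submodule k A, V.FG ∧ ∀ i (n : ℕ), (p i).eval (n : A) ∈ V := by
  refine ⟨Submodule.span k (⋃ i, (p i).coeffs),
    Submodule.fg_span (Set.finite_iUnion fun i ↦ (p i).coeffs.finite_toSet), fun i n ↦ ?_⟩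
  rw [eval_eq_sum, sum_def]
  refine sum_mem fun j hj ↦ ?_
  have hcoeff : (p i).coeff j * (n : A) ^ j = n ^ j • (p i).coeff j := by
    rw [nsmul_eq_mul, ← Nat.cast_pow, Nat.cast_comm]
  rw [hcoeff]
  exact nsmul_mem (Submodule.subset_span
    (Set.mem_iUnion_of_mem i (coeff_mem_coeffs (mem_support_iff.1 hj)))) _

lemma exists_valuation_sum_eval_mul_pow_le (k : Type*) {F Γ ι : Type*} [Field k] [Field F]
    [Algebra k F] [LinearOrderedCommGroupWithZero Γ] (v : Valuation F Γ) [v.IsTrivialOn k]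
    [Fintype ι] (p : ι → F[X]) {γ : ι → F} {j : ι} (hγ : ∀ i, v (γ i) ≤ v (γ j)) :
    ∃ C, ∀ n : ℕ, v (∑ i, (p i).eval (n : F) * γ i ^ n) ≤ C * v (γ j ^ n) := by
  obtain ⟨V, hV, hpV⟩ := exists_fg_forall_eval_natCast_mem k p
  obtain ⟨C, hC⟩ := exists_valuation_bound v hV
  refine ⟨C, fun n ↦ v.map_sum_le fun i _ ↦ ?_⟩
  rw [map_mul, map_pow, map_pow]
  exact mul_le_mul' (hC _ (hpV i n)).1 (pow_le_pow_left₀ zero_le (hγ i) n)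

lemma exists_eventually_valuation_pow_le_sum {k F ι τ : Type*} [Field k] [IsAlgClosed k]
    [CharZero k] [Field F] [Algebra k F]
    (hF : ∀ x : F, Transcendental k x → Algebra.IsAlgebraic k⟮x⟯ F)
    (v : Valuation F ℤᵐ⁰) [IsPlace k v] [Fintype ι] {γ : ι → F} (hγ : ∀ i, γ i ≠ 0)
    {p : ι → F[X]} {j : ι} (hp : p j ≠ 0) {l : Filter τ} {e : τ → ι → ℕ}
    (he : Tendsto (e · j) l atTop)
    (hsep : ∀ i ≠ j, Separated k l (fun t ↦ γ j ^ e t j) (fun t ↦ γ i ^ e t i)) :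
    ∃ C, ∀ᶠ t in l, v (γ j ^ e t j) ≤ C * v (∑ i, (p i).eval (e t i : F) * γ i ^ e t i) := by
  have : CharZero F := charZero_of_injective_algebraMap (algebraMap k F).injective
  obtain ⟨V, hV, hpV⟩ := exists_fg_forall_eval_natCast_mem k p
  obtain ⟨C, hC⟩ := exists_pow_le_sum hF v hV hγ
  refine ⟨C, ?_⟩
  filter_upwards [eventually_notMem_span_of_separated hF hV hγ (fun t i ↦ hpV i (e t i))
    (he.eventually (eventually_eval_natCast_ne_zero hp)) hsep] with t ht
  exact hC _ (e t) (fun i ↦ hpV i (e t i)) j ht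

/-- The order-reversing embedding `z ↦ exp (-z)` of `ℤ ∪ {∞}` in `ℤᵐ⁰`, sending `∞` to `0`: it turns
additive valuations into multiplicative ones. -/
noncomputable def expNeg (z : WithTop ℤ) : ℤᵐ⁰ :=
  z.recTopCoe 0 fun n ↦ exp (-n)

lemma expNeg_coe (n : ℤ) : expNeg n = exp (-n) :=
  rfl

lemma expNeg_top : expNeg ⊤ = 0 :=
  rfl

lemma expNeg_add (y z : WithTop ℤ) : expNeg (y + z) = expNeg y * expNeg z := by
  induction y with
  | top => rw [top_add, expNeg_top, zero_mul]
  | coe m =>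
    induction z with
    | top => rw [add_top, expNeg_top, mul_zero]
    | coe n =>
      rw [← WithTop.coe_add, expNeg_coe, expNeg_coe, expNeg_coe, neg_add, exp_add]

lemma expNeg_strictAnti : StrictAnti expNeg := fun y z h ↦ by
  induction z <;> induction y <;> simp_all [expNeg, -exp_neg]

lemma le_add_log_of_expNeg_le {C : ℤᵐ⁰} {y z : WithTop ℤ} (h : expNeg y ≤ C * expNeg z) :
    z ≤ y + (log C : ℤ) := by
  rcases eq_or_ne C 0 with rfl | hC
  · rw [zero_mul, ← expNeg_top, expNeg_strictAnti.le_iff_ge, top_le_iff] at h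
    simp [h]
  · rw [← expNeg_strictAnti.le_iff_ge, expNeg_add, expNeg_coe, exp_neg, exp_log hC]
    exact mul_inv_le_of_le_mul₀ zero_le zero_le (mul_comm C _ ▸ h)

namespace FFValuation

variable {F : Type*} [Field F] [Algebra ℂ F] (μ : FFValuation F)

/-- The multiplicative form `f ↦ exp (-μ f)` of the valuation `μ`. -/
noncomputable def toValuation : Valuation F ℤᵐ⁰ where
  toFun f := expNeg (μ.v f)
  map_zero' := by rw [μ.v_zero, expNeg_top]
  map_one' := by
    rw [← map_one (algebraMap ℂ F), μ.v_const 1 one_ne_zero]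
    rfl
  map_mul' f g := by rw [μ.v_mul, expNeg_add]
  map_add_le_max' f g := by
    rw [← expNeg_strictAnti.antitone.map_min]
    exact expNeg_strictAnti.antitone (μ.v_add f g)

lemma toValuation_apply (f : F) : μ.toValuation f = expNeg (μ.v f) :=
  rfl

instance : IsPlace ℂ μ.toValuation where
  eq_one c hc := by
    rw [toValuation_apply, μ.v_const c hc]
    rfl
  exists_uniformizer := μ.v_exists_one.imp fun f hf ↦ by
    rw [toValuation_apply, hf]
    rfl

end FFValuation

theorem stmt_0_general {k F ι κ : Type*} [Field k] [IsAlgClosed k] [CharZero k] [Field F]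
    [Algebra k F] [Algebra (RatFunc k) F] [IsScalarTower k (RatFunc k) F] (hF : FunctionField k F)
    [Fintype ι] [Fintype κ] {α : ι → F} {A : ι → F[X]} {β : κ → F} (B : κ → F[X])
    (hα : ∀ i, α i ≠ 0) (hβ : ∀ j, β j ≠ 0) {i₀ : ι} (hA : A i₀ ≠ 0)
    (hαα : ∀ i ≠ i₀, α i₀ / α i ∉ Set.range (algebraMap k F))
    (hαβ : ∀ j (r s : ℤ), α i₀ ^ r * β j ^ s ∈ Set.range (algebraMap k F) → r = 0 ∧ s = 0)
    (v : Valuation F ℤᵐ⁰) [IsPlace k v] (hv : ∀ i, v (α i) ≤ v (α i₀))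
    {a : F} (ha : a ≠ 0) (b : F) :
    ∃ C, ∀ᶠ n : ℕ in atTop, ∀ m : ℕ, v (∑ i, (A i).eval (n : F) * α i ^ n) ≤
      C * v (a * ∑ i, (A i).eval (n : F) * α i ^ n - b * ∑ j, (B j).eval (m : F) * β j ^ m) := by
  let γ : ι ⊕ κ → F := Sum.elim α β
  let e : ℕ × ℕ → ι ⊕ κ → ℕ := fun t ↦ Sum.elim (fun _ ↦ t.1) fun _ ↦ t.2
  let p : ι ⊕ κ → F[X] := Sum.elim (fun i ↦ Polynomial.C a * A i) fun j ↦ Polynomial.C (-b) * B j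
  have hfst : Tendsto Prod.fst (comap Prod.fst atTop : Filter (ℕ × ℕ)) atTop := tendsto_comap
  have hsep : ∀ i ≠ .inl i₀, Separated k (comap Prod.fst atTop)
      (fun t ↦ γ (.inl i₀) ^ e t (.inl i₀)) (fun t ↦ γ i ^ e t i) := by
    rintro (i | j) hi
    · exact separated_pow_of_div_notMem_range hF (hα i₀) (hα i) hfst
        (hαα i fun h ↦ hi (congrArg _ h))
    · exact separated_pow_of_multiplicatively_independent hF (hα i₀) (hβ j) hfst (hαβ j) Prod.snd
  obtain ⟨C, hC⟩ := exists_valuation_sum_eval_mul_pow_le k v A hv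
  obtain ⟨C', hC'⟩ := exists_eventually_valuation_pow_le_sum
    (fun _ ↦ isAlgebraic_adjoin_of_functionField hF) v (Sum.forall.2 ⟨hα, hβ⟩) (p := p)
    (j := .inl i₀) (mul_ne_zero (C_ne_zero.2 ha) hA) hfst hsep
  refine ⟨C * C', ?_⟩
  filter_upwards [eventually_comap.1 hC'] with n hn m
  refine (hC n).trans (mul_assoc C C' _ ▸ mul_le_mul_right ?_ C)
  simpa [γ, e, p, mul_assoc, ← Finset.mul_sum, ← sub_eq_add_neg] using hn (n, m) rfl

theorem stmt_0
    (F : Type*) [Field F] [Algebra ℂ F] [Algebra (RatFunc ℂ) F]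
    [IsScalarTower ℂ (RatFunc ℂ) F] (hFF : FunctionField ℂ F)
    (d t : ℕ)
    -- the data of the two linear recurrence sequences
    (α : Fin (d + 1) → F) (A : Fin (d + 1) → Polynomial F)
    (β : Fin (t + 1) → F) (B : Fin (t + 1) → Polynomial F)
    (hα0 : ∀ i, α i ≠ 0) (hA0 : ∀ i, A i ≠ 0)
    (hβ0 : ∀ j, β j ≠ 0) (hB0 : ∀ j, B j ≠ 0)
    (hαinj : Function.Injective α) (hβinj : Function.Injective β)
    -- non-degeneracy
    (hGnd : ∀ i j, i ≠ j → ¬ IsConst F (α i / α j))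
    (hHnd : ∀ i j, i ≠ j → ¬ IsConst F (β i / β j))
    -- `α₁ ∉ ℂ`
    (hα1 : ¬ IsConst F (α 0))
    -- `(α₁, βⱼ)` multiplicatively independent for all `j`
    (hindep : ∀ j, MultIndep F (α 0) (β j))
    -- a valuation `μ` with `μ(α₁) ≤ μ(αᵢ)` for all `i`
    (μ : FFValuation F)
    (hμmin : ∀ i, μ.v (α 0) ≤ μ.v (α i))
    (a b : F) (ha : a ≠ 0) (hb : b ≠ 0)
    (G H : ℕ → F)
    (hG : ∀ n : ℕ, G n = ∑ i, (A i).eval (n : F) * α i ^ n)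
    (hH : ∀ m : ℕ, H m = ∑ j, (B j).eval (m : F) * β j ^ m) :
    ∃ c₀ : ℕ, ∃ C : ℤ, ∀ n m : ℕ, c₀ < min n m →
      μ.v (a * G n - b * H m) ≤ μ.v (G n) + (C : WithTop ℤ) := by
  obtain ⟨C, hC⟩ := stmt_0_general hFF (A := A) B hα0 hβ0 (hA0 0) (fun i hi ↦ hGnd 0 i hi.symm)
    hindep μ.toValuation (fun i ↦ expNeg_strictAnti.antitone (hμmin i)) ha b
  obtain ⟨c₀, hc₀⟩ := eventually_atTop.1 hC
  refine ⟨c₀, log C, fun n m hnm ↦ le_add_log_of_expNeg_le ?_⟩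
  rw [hG, hH]
  exact hc₀ n (lt_min_iff.1 hnm).1.le m
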